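/- Let λ ∈ ℂ and let v = v(q) be any complex polynomial in the single variable q (regarded as a polynomial in x, y, q constant in x and y). Then, with X_s v = y ∂_q v + i x q v, one has the identities (∂_x(x∂_x + y∂_y − λ + 1/4) + (1/2)q(i q ∂_y − ∂_x ∂_q))(X_s v) = (3/4 − λ) · i q v and (∂_y(x∂_x + y∂_y − λ + 1/4) − (i/2)∂_q(i q ∂_y − ∂_x ∂_q))(X_s v) = (3/4 − λ) · ∂_q v. -/

import Mathlib

open MvPolynomial Complex

noncomputable section

/-- The space of complex polynomials in three variables `x = X 0`, `y = X 1`, `q = X 2`. -/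
abbrev V : Type := MvPolynomial (Fin 3) ℂ

/-- Partial derivative `∂_x`. -/
def Dx : Module.End ℂ V := (pderiv (0 : Fin 3)).toLinearMap
/-- Partial derivative `∂_y`. -/
def Dy : Module.End ℂ V := (pderiv (1 : Fin 3)).toLinearMap
/-- Partial derivative `∂_q`. -/
def Dq : Module.End ℂ V := (pderiv (2 : Fin 3)).toLinearMap
/-- Multiplication by `x`. -/
def Mx : Module.End ℂ V := LinearMap.mulLeft ℂ (X 0)
/-- Multiplication by `y`. -/
def My : Module.End ℂ V := LinearMap.mulLeft ℂ (X 1)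
/-- Multiplication by `q`. -/
def Mq : Module.End ℂ V := LinearMap.mulLeft ℂ (X 2)

/-- `X = -y ∂_x - (i/2) q²`. -/
def opX : Module.End ℂ V := -(My * Dx) - (I / 2) • (Mq * Mq)
/-- `H = -x ∂_x + y ∂_y + q ∂_q + 1/2`. -/
def opH : Module.End ℂ V := -(Mx * Dx) + My * Dy + Mq * Dq + (1 / 2 : ℂ) • 1
/-- `Y = -x ∂_y - (i/2) ∂_q²`. -/
def opY : Module.End ℂ V := -(Mx * Dy) - (I / 2) • (Dq * Dq)
/-- `E = x ∂_x + y ∂_y + 1/2`. -/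
def opE : Module.End ℂ V := Mx * Dx + My * Dy + (1 / 2 : ℂ) • 1
/-- The symplectic Dirac operator `D_s = i q ∂_y - ∂_x ∂_q`. -/
def Ds : Module.End ℂ V := I • (Mq * Dy) - Dx * Dq
/-- `X_s = y ∂_q + i x q`. -/
def Xs : Module.End ℂ V := My * Dq + I • (Mx * Mq)
/-- `O1 = x² ∂_x + x y ∂_y - (1/2) x q ∂_q + (i/2) y ∂_q² + (1/2) x`. -/
def opO1 : Module.End ℂ V :=
  Mx * Mx * Dx + Mx * My * Dy - (1 / 2 : ℂ) • (Mx * Mq * Dq) + (I / 2) • (My * Dq * Dq)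
    + (1 / 2 : ℂ) • Mx
/-- `O2 = x y ∂_x + y² ∂_y + (1/2) y q ∂_q + (i/2) x q² + y`. -/
def opO2 : Module.End ℂ V :=
  Mx * My * Dx + My * My * Dy + (1 / 2 : ℂ) • (My * Mq * Dq) + (I / 2) • (Mx * Mq * Mq) + My

/-- The image in `V` of a one-variable polynomial `v(q)`, constant in `x` and `y`. -/
def ofQ (v : Polynomial ℂ) : V := Polynomial.aeval (X 2 : V) v

/-!
If `A w = 0` then `A (X_s w) = ⁅A, X_s⁆ w`, so only brackets with `X_s` matter on the polynomials
`w` killed by `∂_x` and `∂_y`. The brackets of the generators `∂_x`, `∂_y`, `∂_q`, `x`, `y`, `q`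
with `X_s` are `iq`, `∂_q`, `ix`, `0`, `0`, `-y`, and the Leibniz rule then shows that `X_s` raises
the degree in `(x, y)` by one and that `⁅D_s, X_s⁆ = -i (x ∂_x + y ∂_y + 1)`. Hence on `X_s w` the
Euler operator `x ∂_x + y ∂_y` acts as `1` and `D_s` returns `-i w`, so that both operators produce
the scalar `(1 + 1/4 - λ) - 1/2 = 3/4 - λ`.
-/

theorem pderiv_comm {R σ : Type*} [CommRing R] (i j : σ) (f : MvPolynomial σ R) :
    pderiv i (pderiv j f) = pderiv j (pderiv i f) := by
  classical
  have lie_eq_zero : ⁅pderiv (R := R) i, pderiv (R := R) j⁆ = 0 := derivation_ext fun k => by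
    simp [Derivation.commutator_apply, pderiv_X, Pi.single_apply, apply_ite]
  rw [← sub_eq_zero, ← Derivation.commutator_apply, lie_eq_zero, Derivation.zero_apply]

theorem apply_apply_eq_lie_apply {R M : Type*} [Ring R] [AddCommGroup M] [Module R M]
    {A : Module.End R M} {w : M} (hw : A w = 0) (B : Module.End R M) :
    A (B w) = ⁅A, B⁆ w := by
  rw [Ring.lie_def, LinearMap.sub_apply, Module.End.mul_apply, Module.End.mul_apply, hw, map_zero,
    sub_zero]

section CommutatorBracket

attribute [local instance] LieRing.ofAssociativeRing

theorem mul_lie {A : Type*} [NonUnitalRing A] (a b c : A) :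
    ⁅a * b, c⁆ = a * ⁅b, c⁆ + ⁅a, c⁆ * b := by
  simp only [Ring.lie_def, mul_sub, sub_mul, mul_assoc, sub_add_sub_cancel]

theorem lie_Dx_Xs : ⁅Dx, Xs⁆ = I • Mq := by
  refine LinearMap.ext fun w => ?_
  simp [Ring.lie_def, Xs, Dx, Dq, Mx, My, Mq, pderiv_comm (2 : Fin 3) 0]

theorem lie_Dy_Xs : ⁅Dy, Xs⁆ = Dq := by
  refine LinearMap.ext fun w => ?_
  simp [Ring.lie_def, Xs, Dy, Dq, Mx, My, Mq, pderiv_comm (2 : Fin 3) 1]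

theorem lie_Dq_Xs : ⁅Dq, Xs⁆ = I • Mx := by
  refine LinearMap.ext fun w => ?_
  simp [Ring.lie_def, Xs, Dq, Mx, My, Mq, mul_add, add_sub_right_comm]

theorem lie_Mx_Xs : ⁅Mx, Xs⁆ = 0 := by
  refine LinearMap.ext fun w => ?_
  simp [Ring.lie_def, Xs, Dq, Mx, My, Mq, mul_add, mul_left_comm (X 0 : V)]

theorem lie_My_Xs : ⁅My, Xs⁆ = 0 := by
  refine LinearMap.ext fun w => ?_
  simp [Ring.lie_def, Xs, Dq, Mx, My, Mq, mul_add, mul_left_comm (X 1 : V)]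

theorem lie_Mq_Xs : ⁅Mq, Xs⁆ = -My := by
  refine LinearMap.ext fun w => ?_
  simp [Ring.lie_def, Xs, Dq, Mx, My, Mq, mul_add, mul_left_comm (X 2 : V)]

theorem lie_euler_Xs : ⁅Mx * Dx + My * Dy, Xs⁆ = Xs := by
  rw [add_lie, mul_lie, mul_lie, lie_Dx_Xs, lie_Dy_Xs, lie_Mx_Xs, lie_My_Xs, zero_mul,
    zero_mul, add_zero, add_zero, mul_smul_comm, add_comm, Xs]

theorem Dx_mul_Mx : Dx * Mx = Mx * Dx + 1 := by
  refine LinearMap.ext fun w => ?_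
  simp [Dx, Mx]

theorem lie_Ds_Xs : ⁅Ds, Xs⁆ = -(I • (Mx * Dx + My * Dy + 1)) := by
  -- As rewrite rules, `smul_lie` and `neg_mul` fail to unify the instances on `Module.End ℂ V`.
  have lie_smul_Mq_Dy : ⁅I • (Mq * Dy), Xs⁆ = I • ⁅Mq * Dy, Xs⁆ :=
    smul_lie (L := Module.End ℂ V) I _ _
  have neg_My_mul_Dy : -My * Dy = -(My * Dy) := LinearMap.neg_comp Dy My
  calc ⁅Ds, Xs⁆
      = I • (Mq * ⁅Dy, Xs⁆ + ⁅Mq, Xs⁆ * Dy) - (Dx * ⁅Dq, Xs⁆ + ⁅Dx, Xs⁆ * Dq) := by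
        rw [Ds, sub_lie, lie_smul_Mq_Dy, mul_lie, mul_lie]
    _ = I • (Mq * Dq - My * Dy) - (I • (Mx * Dx + 1) + I • (Mq * Dq)) := by
        rw [lie_Dx_Xs, lie_Dy_Xs, lie_Dq_Xs, lie_Mq_Xs, neg_My_mul_Dy, ← sub_eq_add_neg,
          mul_smul_comm, smul_mul_assoc, Dx_mul_Mx]
    _ = -(I • (Mx * Dx + My * Dy + 1)) := by module

end CommutatorBracket

/-- The operator `π̂_λ(e1)`, the image of the nilradical generator `e1 = E_{12}` of `sl(3, ℂ)`
under the Fourier-transformed realization; `l` stands for `λ`. -/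
def fourierE1 (l : ℂ) : Module.End ℂ V :=
  Dx * (Mx * Dx + My * Dy + (1 / 4 - l) • 1) + (1 / 2 : ℂ) • (Mq * Ds)

/-- The operator `π̂_λ(e2)`, the image of the nilradical generator `e2 = E_{13}` of `sl(3, ℂ)`
under the Fourier-transformed realization; `l` stands for `λ`. -/
def fourierE2 (l : ℂ) : Module.End ℂ V :=
  Dy * (Mx * Dx + My * Dy + (1 / 4 - l) • 1) - (I / 2) • (Dq * Ds)

theorem euler_apply_eq_zero {w : V} (hx : Dx w = 0) (hy : Dy w = 0) :
    (Mx * Dx + My * Dy) w = 0 := by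
  rw [LinearMap.add_apply, Module.End.mul_apply, Module.End.mul_apply, hx, hy, map_zero, map_zero,
    add_zero]

theorem Dx_Xs_apply {w : V} (hx : Dx w = 0) : Dx (Xs w) = I • Mq w := by
  rw [apply_apply_eq_lie_apply hx, lie_Dx_Xs, LinearMap.smul_apply]

theorem Dy_Xs_apply {w : V} (hy : Dy w = 0) : Dy (Xs w) = Dq w := by
  rw [apply_apply_eq_lie_apply hy, lie_Dy_Xs]

theorem euler_Xs_apply {w : V} (hx : Dx w = 0) (hy : Dy w = 0) :
    (Mx * Dx + My * Dy) (Xs w) = Xs w := by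
  rw [apply_apply_eq_lie_apply (euler_apply_eq_zero hx hy), lie_euler_Xs]

theorem Ds_apply_eq_zero {w : V} (hx : Dx w = 0) (hy : Dy w = 0) : Ds w = 0 := by
  have comm : Dx (Dq w) = Dq (Dx w) := pderiv_comm 0 2 w
  simp [Ds, comm, hx, hy]

theorem Ds_Xs_apply {w : V} (hx : Dx w = 0) (hy : Dy w = 0) : Ds (Xs w) = -(I • w) := by
  rw [apply_apply_eq_lie_apply (Ds_apply_eq_zero hx hy), lie_Ds_Xs, LinearMap.neg_apply,
    LinearMap.smul_apply, LinearMap.add_apply, euler_apply_eq_zero hx hy, zero_add,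
    Module.End.one_apply]

theorem shifted_euler_Xs_apply {w : V} (hx : Dx w = 0) (hy : Dy w = 0) (c : ℂ) :
    (Mx * Dx + My * Dy + c • 1) (Xs w) = (1 + c) • Xs w := by
  rw [LinearMap.add_apply, euler_Xs_apply hx hy, LinearMap.smul_apply, Module.End.one_apply,
    add_smul, one_smul]

theorem fourierE1_Xs_apply {w : V} (hx : Dx w = 0) (hy : Dy w = 0) (l : ℂ) :
    fourierE1 l (Xs w) = (3 / 4 - l) • (I • Mq w) := by
  calc fourierE1 l (Xs w)
      = Dx ((1 + (1 / 4 - l)) • Xs w) + (1 / 2 : ℂ) • Mq (-(I • w)) := by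
        rw [← shifted_euler_Xs_apply hx hy, ← Ds_Xs_apply hx hy]; rfl
    _ = (1 + (1 / 4 - l)) • (I • Mq w) - (1 / 2 : ℂ) • (I • Mq w) := by
        rw [map_smul, Dx_Xs_apply hx, map_neg, map_smul, smul_neg, ← sub_eq_add_neg]
    _ = (3 / 4 - l) • (I • Mq w) := by module

theorem fourierE2_Xs_apply {w : V} (hx : Dx w = 0) (hy : Dy w = 0) (l : ℂ) :
    fourierE2 l (Xs w) = (3 / 4 - l) • Dq w := by
  calc fourierE2 l (Xs w)
      = Dy ((1 + (1 / 4 - l)) • Xs w) - (I / 2) • Dq (-(I • w)) := by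
        rw [← shifted_euler_Xs_apply hx hy, ← Ds_Xs_apply hx hy]; rfl
    _ = (1 + (1 / 4 - l)) • Dq w + (I / 2) • (I • Dq w) := by
        rw [map_smul, Dy_Xs_apply hy, map_neg, map_smul, smul_neg, sub_neg_eq_add]
    _ = (3 / 4 - l) • Dq w := by
        rw [smul_smul, ← add_smul]
        congr 1
        linear_combination (1 / 2 : ℂ) * I_mul_I

theorem pderiv_ofQ_of_ne {i : Fin 3} (hi : i ≠ 2) (v : Polynomial ℂ) : pderiv i (ofQ v) = 0 := by
  rw [ofQ, Derivation.map_aeval, pderiv_X_of_ne hi.symm, smul_zero]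

theorem Dx_ofQ (v : Polynomial ℂ) : Dx (ofQ v) = 0 := pderiv_ofQ_of_ne (by decide) v

theorem Dy_ofQ (v : Polynomial ℂ) : Dy (ofQ v) = 0 := pderiv_ofQ_of_ne (by decide) v

/-- For `λ ∈ ℂ` and any polynomial `v = v(q)` in the single variable `q`, with
`X_s v = y ∂_q v + i x q v`, one has
`π̂_λ(e1)(X_s v) = (3/4 - λ) · i q v` and `π̂_λ(e2)(X_s v) = (3/4 - λ) · ∂_q v`. -/
theorem singular_vector_computation (l : ℂ) (v : Polynomial ℂ) :
    (Dx * (Mx * Dx + My * Dy + (1 / 4 - l) • 1) + (1 / 2 : ℂ) • (Mq * Ds)) (Xs (ofQ v))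
      = (3 / 4 - l) • (I • Mq (ofQ v)) ∧
    (Dy * (Mx * Dx + My * Dy + (1 / 4 - l) • 1) - (I / 2) • (Dq * Ds)) (Xs (ofQ v))
      = (3 / 4 - l) • Dq (ofQ v) :=
  ⟨fourierE1_Xs_apply (Dx_ofQ v) (Dy_ofQ v) l, fourierE2_Xs_apply (Dx_ofQ v) (Dy_ofQ v) l⟩
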